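/- arXiv:1504.00354 — 3 statements merged into one kernel-verified Lean document; each statement's English description precedes it below -/
import Mathlib

section
/- Let E be a homogeneous effect algebra. For every block B⁰ of the orthoalgebra E_S of sharp elements of E and for every block B of E such that B⁰ ⊆ B, one has B⁰ = C(B), the center of the effect algebra B. -/
/-- An effect algebra: a partial commutative, associative operation `oplus`
(with definedness encoded via `Option`), constants `zero` and `one`,
unique orthosupplements, and `a ⊕ 1` defined only for `a = 0`. -/
structure EffectAlgebra (E : Type*) where
  oplus : E → E → Option E
  zero : E
  one : E
  comm : ∀ a b, oplus a b = oplus b a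
  assoc : ∀ a b c ab abc, oplus a b = some ab → oplus ab c = some abc →
    ∃ bc, oplus b c = some bc ∧ oplus a bc = some abc
  compl_exists : ∀ a, ∃ b, oplus a b = some one
  compl_unique : ∀ a b c, oplus a b = some one → oplus a c = some one → b = c
  add_one : ∀ a b, oplus a one = some b → a = zero

namespace EffectAlgebra

variable {E : Type*} (A : EffectAlgebra E)

/-- `a ⊥ b` : the sum `a ⊕ b` is defined. -/
def Perp (a b : E) : Prop := (A.oplus a b).isSome

/-- `a ≤ b` iff `b = a ⊕ c` for some `c`. -/
def le (a b : E) : Prop := ∃ c, A.oplus a c = some b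

/-- The orthosupplement `a'`: the unique `b` with `a ⊕ b = 1`. -/
noncomputable def compl (a : E) : E :=
  @Classical.epsilon E ⟨A.zero⟩ fun b => A.oplus a b = some A.one

/-- `a ⊖ b` : the unique `c` with `b ⊕ c = a` (defined when `b ≤ a`). -/
noncomputable def ominus (a b : E) : E :=
  @Classical.epsilon E ⟨A.zero⟩ fun c => A.oplus b c = some a

/-- Homogeneity. -/
def Homogeneous : Prop :=
  ∀ u v₁ v₂ s, A.oplus v₁ v₂ = some s → A.le u s → A.le u (A.compl s) →
    ∃ u₁ u₂, A.le u₁ v₁ ∧ A.le u₂ v₂ ∧ A.oplus u₁ u₂ = some u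

/-- Riesz decomposition property. -/
def RDP : Prop :=
  ∀ u v₁ v₂ s, A.oplus v₁ v₂ = some s → A.le u s →
    ∃ u₁ u₂, A.le u₁ v₁ ∧ A.le u₂ v₂ ∧ A.oplus u₁ u₂ = some u

/-- The sum `c₁ ⊕ … ⊕ cₙ` of a finite family (a list); `some s` iff the family
is orthogonal with sum `s`. -/
def sumList : List E → Option E
  | [] => some A.zero
  | x :: xs => (sumList xs).bind fun s => A.oplus x s

/-- The subfamily of `C` indexed by a set of indices `S ⊆ {1,…,n}`. -/
def pickList (C : List E) (S : Finset (Fin C.length)) : List E :=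
  (S.sort (· ≤ ·)).map C.get

/-- `C` is an orthogonal cover of `M`. -/
def IsCoverOf (C : List E) (M : Set E) : Prop :=
  (A.sumList C).isSome ∧
    ∀ a ∈ M, ∃ S : Finset (Fin C.length), A.sumList (pickList C S) = some a

/-- `M` is compatible with covers in `X`: every finite subset of `M` has an
orthogonal cover with range contained in `X`. -/
def CompatWithCoversIn (M X : Set E) : Prop :=
  ∀ F : Finset E, ↑F ⊆ M →
    ∃ C : List E, (∀ c ∈ C, c ∈ X) ∧ A.IsCoverOf C ↑F

/-- `M` is compatible (with covers in `E`). -/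
def Compatible (M : Set E) : Prop := A.CompatWithCoversIn M Set.univ

/-- `M` is internally compatible. -/
def InternallyCompatible (M : Set E) : Prop := A.CompatWithCoversIn M M

/-- `D` is a refinement of `C`: a partition `{P i}` of the index set of `D`
with `C i = ⊕_{j ∈ P i} D j`. -/
def IsRefinement (D C : List E) : Prop :=
  ∃ P : Fin C.length → Finset (Fin D.length),
    (∀ i j, i ≠ j → Disjoint (P i) (P j)) ∧
    (∀ k, ∃ i, k ∈ P i) ∧
    (∀ i, A.sumList (pickList D (P i)) = some (C.get i))

/-- One step of the closure construction `M ↦ M₁`. -/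
def closureStep (M : Set E) : Set E :=
  {x | ∃ y ∈ M, A.le x y ∧ A.le x (A.compl y)} ∪
  {z | ∃ y ∈ M, ∃ x, A.le x y ∧ A.le x (A.compl y) ∧ A.oplus x z = some y}

/-- The sets `Mₙ`. -/
def closureSeq (M : Set E) (n : ℕ) : Set E := (A.closureStep)^[n] M

/-- The closure `M̄ = ⋃ₙ Mₙ`. -/
def closure (M : Set E) : Set E := ⋃ n, A.closureSeq M n

/-- `B` is a sub-effect algebra of `E`. -/
def IsSubEA (B : Set E) : Prop :=
  A.one ∈ B ∧ ∀ a ∈ B, ∀ b ∈ B, A.le b a → A.ominus a b ∈ B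

/-- The Riesz decomposition property for (the effect algebra on) a subset `B`. -/
def RDPOn (B : Set E) : Prop :=
  ∀ u v₁ v₂ s, u ∈ B → v₁ ∈ B → v₂ ∈ B → A.oplus v₁ v₂ = some s → A.le u s →
    ∃ u₁ u₂, u₁ ∈ B ∧ u₂ ∈ B ∧ A.le u₁ v₁ ∧ A.le u₂ v₂ ∧ A.oplus u₁ u₂ = some u

/-- Homogeneity for (the effect algebra on) a subset `B`. -/
def HomogeneousOn (B : Set E) : Prop :=
  ∀ u v₁ v₂ s, u ∈ B → v₁ ∈ B → v₂ ∈ B → A.oplus v₁ v₂ = some s →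
    A.le u s → A.le u (A.compl s) →
    ∃ u₁ u₂, u₁ ∈ B ∧ u₂ ∈ B ∧ A.le u₁ v₁ ∧ A.le u₂ v₂ ∧ A.oplus u₁ u₂ = some u

/-- A block: a maximal sub-effect algebra satisfying the Riesz decomposition
property. -/
def IsBlock (B : Set E) : Prop :=
  A.IsSubEA B ∧ A.RDPOn B ∧
    ∀ B', A.IsSubEA B' → A.RDPOn B' → B ⊆ B' → B' = B

/-- A block of the sub-effect algebra on `F`: a maximal sub-effect algebra of
`F` satisfying the Riesz decomposition property. -/
def IsBlockIn (F B : Set E) : Prop :=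
  B ⊆ F ∧ A.IsSubEA B ∧ A.RDPOn B ∧
    ∀ B', B' ⊆ F → A.IsSubEA B' → A.RDPOn B' → B ⊆ B' → B' = B

/-- `a` is sharp: the infimum `a ∧ a'` exists and equals `0`, i.e. every common
lower bound of `a` and `a'` is `0`. -/
def Sharp (a : E) : Prop :=
  ∀ b, A.le b a → A.le b (A.compl a) → b = A.zero

/-- `a` is sharp in the sub-effect algebra on `F`. -/
def SharpIn (F : Set E) (a : E) : Prop :=
  a ∈ F ∧ ∀ b ∈ F, A.le b a → A.le b (A.compl a) → b = A.zero

/-- `a` is principal. -/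
def Principal (a : E) : Prop :=
  ∀ x y s, A.le x a → A.le y a → A.oplus x y = some s → A.le s a

/-- `a` is principal in the sub-effect algebra on `B`. -/
def PrincipalIn (B : Set E) (a : E) : Prop :=
  a ∈ B ∧ ∀ x ∈ B, ∀ y ∈ B, ∀ s, A.le x a → A.le y a →
    A.oplus x y = some s → A.le s a

/-- `a` is central: principal, and every `b` has a unique decomposition
`b = b₁ ⊕ b₂` with `b₁ ≤ a`, `b₂ ≤ a'`. -/
def Central (a : E) : Prop :=
  A.Principal a ∧ ∀ b, ∃! p : E × E,
    A.le p.1 a ∧ A.le p.2 (A.compl a) ∧ A.oplus p.1 p.2 = some b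

/-- `a` is central in the sub-effect algebra on `B`. -/
def CentralIn (B : Set E) (a : E) : Prop :=
  A.PrincipalIn B a ∧ ∀ b ∈ B, ∃! p : E × E,
    p.1 ∈ B ∧ p.2 ∈ B ∧ A.le p.1 a ∧ A.le p.2 (A.compl a) ∧
      A.oplus p.1 p.2 = some b

/-- The center `C(E)`. -/
def center : Set E := {a | A.Central a}

/-- The compatibility center `K(E)`: the intersection of all blocks. -/
def compatCenter : Set E := {x | ∀ B, A.IsBlock B → x ∈ B}

end EffectAlgebra

namespace SharpBlock

structure PEA {G : Type*} [AddCommMonoid G] (inf one : G) : Prop where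
  inf_add : ∀ x, inf + x = inf
  cancel : ∀ x y z, x + y = x + z → x + y ≠ inf → y = z
  compl : ∀ x, x ≠ inf → ∃ y, x + y = one
  one_ne : one ≠ inf
  add_one : ∀ x, x + one ≠ inf → x = 0

section
variable {G : Type*} [AddCommMonoid G] {inf one : G}

theorem PEA.left (h : PEA inf one) {x y : G} (hxy : x + y ≠ inf) : x ≠ inf := by
  rintro rfl; exact hxy (h.inf_add y)

theorem PEA.right (h : PEA inf one) {x y : G} (hxy : x + y ≠ inf) : y ≠ inf := by
  rw [add_comm] at hxy; exact h.left hxy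

theorem PEA.zero_ne (h : PEA inf one) : (0 : G) ≠ inf := by
  have : (0 : G) + one ≠ inf := by rw [zero_add]; exact h.one_ne
  exact h.left this

theorem PEA.pos (h : PEA inf one) {x y : G} (hxy : x + y = 0) : x = 0 := by
  apply h.add_one
  have : x + one + y ≠ inf := by
    rw [add_right_comm, hxy, zero_add]; exact h.one_ne
  exact h.left this

/-- `X` is closed under passing to both parts of a splitting of `x + w` orthogonal to `x`. -/
def Closed (inf : G) (X : Set G) : Prop :=
  ∀ x w, x + w ∈ X → x + w + x ≠ inf → x ∈ X ∧ w ∈ X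

inductive Cl (inf : G) (M : Set G) : G → Prop
  | base (x) : x ∈ M → Cl inf M x
  | low (x w) : Cl inf M (x + w) → x + w + x ≠ inf → Cl inf M x
  | diff (x w) : Cl inf M (x + w) → x + w + x ≠ inf → Cl inf M w

theorem closed_cl (M : Set G) : Closed inf {x | Cl inf M x} :=
  fun x w h1 h2 => ⟨Cl.low x w h1 h2, Cl.diff x w h1 h2⟩

def Hom (inf : G) : Prop :=
  ∀ u z v1 v2 : G, u + z = v1 + v2 → v1 + v2 + u ≠ inf →
    ∃ u1 w1 u2 w2, u1 + w1 = v1 ∧ u2 + w2 = v2 ∧ u1 + u2 = u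

def SubEA (one : G) (M : Set G) : Prop :=
  one ∈ M ∧ ∀ b d, b ∈ M → b + d ∈ M → d ∈ M

def RD (inf : G) (M : Set G) : Prop :=
  ∀ u z v1 v2, u ∈ M → v1 ∈ M → v2 ∈ M → u + z = v1 + v2 → v1 + v2 ≠ inf →
    ∃ u1 w1 u2 w2, u1 ∈ M ∧ u2 ∈ M ∧ u1 + w1 = v1 ∧ u2 + w2 = v2 ∧ u1 + u2 = u

theorem SubEA.add (h : PEA inf one) {M : Set G} (hM : SubEA one M) {a b : G}
    (ha : a ∈ M) (hb : b ∈ M) (hab : a + b ≠ inf) : a + b ∈ M := by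
  obtain ⟨c, hc⟩ := h.compl _ hab
  have h1 : b + c ∈ M := hM.2 a _ ha (by rw [← add_assoc, hc]; exact hM.1)
  have h2 : c ∈ M := hM.2 b _ hb h1
  exact hM.2 c _ h2 (by rw [add_comm, hc]; exact hM.1)

theorem SubEA.zero {M : Set G} (hM : SubEA one M) : (0 : G) ∈ M :=
  hM.2 one 0 hM.1 (by rw [add_zero]; exact hM.1)

theorem SubEA.sum (h : PEA inf one) {M : Set G} (hM : SubEA one M) (C : Multiset G) :
    (∀ c ∈ C, c ∈ M) → C.sum ≠ inf → C.sum ∈ M := by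
  induction C using Multiset.induction_on with
  | empty => intro _ _; simpa using hM.zero
  | cons a C ih =>
    intro h1 h2
    rw [Multiset.sum_cons] at h2 ⊢
    exact hM.add h (h1 a (by simp)) (ih (fun c hc => h1 c (by simp [hc])) (h.right h2)) h2

def plus (p : G × G) : G := p.1 + p.2

theorem map_split {α β : Type*} (g : α → β) (S : Multiset β) : ∀ (T : Multiset β) (K : Multiset α),
    K.map g = S + T → ∃ K1 K2, K = K1 + K2 ∧ K1.map g = S ∧ K2.map g = T := by
  classical
  induction S using Multiset.induction_on with
  | empty => intro T K h; exact ⟨0, K, by simp, by simp, by simpa using h⟩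
  | cons a S ih =>
    intro T K h
    rw [Multiset.cons_add] at h
    obtain ⟨k, hk, hka, hK⟩ := (Multiset.map_eq_cons _ _ _ _).2 h
    obtain ⟨K1, K2, e, e1, e2⟩ := ih T _ hK
    refine ⟨k ::ₘ K1, K2, ?_, by simp [e1, hka], e2⟩
    rw [Multiset.cons_add, ← e, Multiset.cons_erase hk]

theorem sum_plus (D : Multiset (G × G)) :
    (D.map plus).sum = (D.map Prod.fst).sum + (D.map Prod.snd).sum :=
  Multiset.sum_map_add

/-- `a` is a subsum of `C`. -/
def IsSub (C : Multiset G) (a : G) : Prop := ∃ S ≤ C, S.sum = a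

theorem refines (R : Multiset G) (D : Multiset (G × G)) (a : G)
    (ha : IsSub (R + D.map plus) a) :
    IsSub (R + (D.map Prod.fst + D.map Prod.snd)) a := by
  classical
  obtain ⟨S, hS, rfl⟩ := ha
  obtain ⟨T, hT⟩ := Multiset.le_iff_exists_add.1 hS
  have h1 : S ∩ R ≤ R := Multiset.inter_le_right
  have h2 : S - R ≤ D.map plus := by
    rw [tsub_le_iff_left]; exact hS
  obtain ⟨T', hT'⟩ := Multiset.le_iff_exists_add.1 h2
  obtain ⟨K1, K2, e, e1, e2⟩ := map_split plus _ _ _ hT'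
  refine ⟨S ∩ R + (K1.map Prod.fst + K1.map Prod.snd), ?_, ?_⟩
  · subst e
    simp only [Multiset.map_add]
    gcongr <;> exact Multiset.le_add_right _ _
  · have : S = S ∩ R + (S - R) := by
      ext x; simp; omega
    conv_rhs => rw [this, Multiset.sum_add, ← e1, sum_plus]
    simp

theorem le_sum_ne (h : PEA inf one) {S C : Multiset G} (hS : S ≤ C) (hC : C.sum ≠ inf) :
    S.sum ≠ inf := by
  obtain ⟨T, rfl⟩ := Multiset.le_iff_exists_add.1 hS
  rw [Multiset.sum_add] at hC
  exact h.left hC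

theorem hom_fin (h : PEA inf one) (hH : Hom inf) {X : Set G} (hX : Closed inf X)
    (Q : Multiset G) : (∀ c ∈ Q, c ∈ X) → ∀ u z, u + z = Q.sum → Q.sum + u ≠ inf →
    ∃ D : Multiset (G × G), D.map plus = Q ∧ (D.map Prod.fst).sum = u ∧
      ∀ p ∈ D, p.1 ∈ X ∧ p.2 ∈ X := by
  induction Q using Multiset.induction_on with
  | empty =>
    intro _ u z h1 h2
    refine ⟨0, by simp, ?_, by simp⟩
    simpa using (h.pos (by simpa using h1)).symm
  | cons a Q ih =>
    intro hQ u z h1 h2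
    rw [Multiset.sum_cons] at h1 h2
    obtain ⟨u1, w1, u2, w2, e1, e2, e3⟩ := hH u z a Q.sum h1 h2
    have k1 : a + u1 + (Q.sum + u2) ≠ inf := by
      rw [← e3] at h2; convert h2 using 1; abel
    obtain ⟨D, d1, d2, d3⟩ := ih (fun c hc => hQ c (by simp [hc])) u2 w2 e2 (h.right k1)
    have k2 := hX u1 w1 (by rw [e1]; exact hQ a (by simp)) (by rw [e1]; exact h.left k1)
    refine ⟨(u1, w1) ::ₘ D, by simp [d1, plus, e1], by simp [d2, e3], ?_⟩
    intro p hp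
    rcases Multiset.mem_cons.1 hp with rfl | hp
    · exact k2
    · exact d3 p hp

/-- Refinement step. -/
theorem refine_step (h : PEA inf one) (hH : Hom inf) {X : Set G} (hX : Closed inf X)
    (R Q : Multiset G) (hR : ∀ c ∈ R, c ∈ X) (hQ : ∀ c ∈ Q, c ∈ X) (_hs : (R + Q).sum ≠ inf)
    (u z : G) (h1 : u + z = Q.sum) (h2 : Q.sum + u ≠ inf) :
    ∃ P P' : Multiset G, P.sum = u ∧ P'.sum = z ∧ (R + (P + P')).sum = (R + Q).sum ∧
      (∀ c ∈ R + (P + P'), c ∈ X) ∧ ∀ a, IsSub (R + Q) a → IsSub (R + (P + P')) a := by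
  obtain ⟨D, d1, d2, d3⟩ := hom_fin h hH hX Q hQ u z h1 h2
  have d4 : Q.sum = (D.map Prod.fst).sum + (D.map Prod.snd).sum := by rw [← d1, sum_plus]
  refine ⟨D.map Prod.fst, D.map Prod.snd, d2, ?_, ?_, ?_, ?_⟩
  · rw [← h1, d2] at d4
    exact (h.cancel u _ _ d4 (by rw [h1]; exact h.left h2)).symm
  · simp only [Multiset.sum_add, d4]
  · intro c hc
    simp only [Multiset.mem_add, Multiset.mem_map] at hc
    rcases hc with hc | ⟨p, hp, rfl⟩ | ⟨p, hp, rfl⟩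
    · exact hR c hc
    · exact (d3 p hp).1
    · exact (d3 p hp).2
  · intro a ha
    rw [← d1] at ha
    exact refines R D a ha

def Nice (inf : G) (M : Set G) : Prop :=
  ∀ F : Finset G, ↑F ⊆ M → ∃ C : Multiset G, (∀ c ∈ C, c ∈ M) ∧ C.sum ≠ inf ∧
    ∀ a ∈ F, IsSub C a

theorem Nice.ne (h : PEA inf one) {M : Set G} (hM : Nice inf M) {a : G} (ha : a ∈ M) :
    a ≠ inf := by
  obtain ⟨C, _, h2, h3⟩ := hM {a} (by simpa using ha)
  obtain ⟨S, hS, rfl⟩ := h3 a (by simp)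
  exact le_sum_ne h hS h2

theorem cl_refine (h : PEA inf one) (hH : Hom inf) (M : Set G) (x : G) (hx : Cl inf M x) :
    ∃ F : Finset G, ↑F ⊆ M ∧ ∀ C : Multiset G, (∀ c ∈ C, Cl inf M c) → C.sum ≠ inf →
      (∀ a ∈ F, IsSub C a) → ∃ C' : Multiset G, (∀ c ∈ C', Cl inf M c) ∧ C'.sum ≠ inf ∧
        (∀ a, IsSub C a → IsSub C' a) ∧ IsSub C' x := by
  have key : ∀ x w, x + w + x ≠ inf → ∀ C : Multiset G, (∀ c ∈ C, Cl inf M c) → C.sum ≠ inf →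
      IsSub C (x + w) → ∃ C' : Multiset G, (∀ c ∈ C', Cl inf M c) ∧ C'.sum ≠ inf ∧
        (∀ a, IsSub C a → IsSub C' a) ∧ IsSub C' x ∧ IsSub C' w := by
    rintro x w hxw C h1 h2 ⟨Q, hQ, hQs⟩
    obtain ⟨R, rfl⟩ := Multiset.le_iff_exists_add.1 hQ
    rw [add_comm Q R] at *
    obtain ⟨P, P', p1, p2, p3, p4, p5⟩ := refine_step h hH (closed_cl M) R Q
      (fun c hc => h1 c (by simp [hc])) (fun c hc => h1 c (by simp [hc])) h2 x w hQs.symm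
      (by rw [hQs]; exact hxw)
    refine ⟨_, p4, by rw [p3]; exact h2, p5, ⟨P, ?_, p1⟩, ⟨P', ?_, p2⟩⟩
    · exact (Multiset.le_add_right P P').trans (Multiset.le_add_left _ _)
    · exact (Multiset.le_add_left P' P).trans (Multiset.le_add_left _ _)
  induction hx with
  | base x hx => exact ⟨{x}, by simpa using hx, fun C h1 h2 h3 =>
      ⟨C, h1, h2, fun _ h => h, h3 x (by simp)⟩⟩
  | low x w _ hxw ih =>
    obtain ⟨F, hF, hF'⟩ := ih
    refine ⟨F, hF, fun C h1 h2 h3 => ?_⟩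
    obtain ⟨C', c1, c2, c3, c4⟩ := hF' C h1 h2 h3
    obtain ⟨C'', d1, d2, d3, d4, d5⟩ := key x w hxw C' c1 c2 c4
    exact ⟨C'', d1, d2, fun a ha => d3 a (c3 a ha), d4⟩
  | diff x w _ hxw ih =>
    obtain ⟨F, hF, hF'⟩ := ih
    refine ⟨F, hF, fun C h1 h2 h3 => ?_⟩
    obtain ⟨C', c1, c2, c3, c4⟩ := hF' C h1 h2 h3
    obtain ⟨C'', d1, d2, d3, d4, d5⟩ := key x w hxw C' c1 c2 c4
    exact ⟨C'', d1, d2, fun a ha => d3 a (c3 a ha), d5⟩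

theorem nice_cl (h : PEA inf one) (hH : Hom inf) {M : Set G} (hM : Nice inf M) :
    Nice inf {x | Cl inf M x} := by
  classical
  intro F hF
  have : ∃ F' : Finset G, ↑F' ⊆ M ∧ ∀ C : Multiset G, (∀ c ∈ C, Cl inf M c) → C.sum ≠ inf →
      (∀ a ∈ F', IsSub C a) → ∃ C' : Multiset G, (∀ c ∈ C', Cl inf M c) ∧ C'.sum ≠ inf ∧
        (∀ a, IsSub C a → IsSub C' a) ∧ ∀ x ∈ F, IsSub C' x := by
    induction F using Finset.induction_on with
    | empty => exact ⟨∅, by simp, fun C h1 h2 _ => ⟨C, h1, h2, fun _ h => h, by simp⟩⟩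
    | insert x F _ ih =>
      obtain ⟨F1, a1, a2⟩ := ih (fun y hy => hF (by simp at hy ⊢; exact Or.inr hy))
      obtain ⟨F2, b1, b2⟩ := cl_refine h hH M x (hF (by simp))
      refine ⟨F1 ∪ F2, by simp [a1, b1], fun C h1 h2 h3 => ?_⟩
      obtain ⟨C', c1, c2, c3, c4⟩ := a2 C h1 h2 (fun a ha => h3 a (by simp [ha]))
      obtain ⟨C'', d1, d2, d3, d4⟩ := b2 C' c1 c2 (fun a ha => c3 a (h3 a (by simp [ha])))
      refine ⟨C'', d1, d2, fun a ha => d3 a (c3 a ha), fun y hy => ?_⟩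
      rcases Finset.mem_insert.1 hy with rfl | hy
      · exact d4
      · exact d3 y (c4 y hy)
  obtain ⟨F', h1, h2⟩ := this
  obtain ⟨C, c1, c2, c3⟩ := hM F' h1
  obtain ⟨C', d1, d2, d3, d4⟩ := h2 C (fun c hc => Cl.base c (c1 c hc)) c2 c3
  exact ⟨C', d1, d2, d4⟩

theorem zorn_nice {M : Set G} (hM : Nice inf M) :
    ∃ N, M ⊆ N ∧ Nice inf N ∧ ∀ N', Nice inf N' → N ⊆ N' → N' = N := by
  obtain ⟨N, hN, hmax⟩ := zorn_subset_nonempty {N | Nice inf N} (by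
    intro c hc hch hne
    refine ⟨⋃₀ c, ?_, fun s hs => Set.subset_sUnion_of_mem hs⟩
    intro F hF
    obtain ⟨N, hN, hFN⟩ := DirectedOn.exists_mem_subset_of_finset_subset_biUnion
      hne (f := id) (s := F) hch.directedOn (by simpa [Set.sUnion_eq_biUnion] using hF)
    obtain ⟨C, c1, c2, c3⟩ := hc hN F hFN
    exact ⟨C, fun x hx => ⟨N, hN, c1 x hx⟩, c2, c3⟩) M hM
  exact ⟨N, hN, hmax.1, fun N' h1 h2 => (hmax.2 h1 h2).antisymm h2⟩

theorem max_closed (h : PEA inf one) (hH : Hom inf) {M : Set G} (hM : Nice inf M)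
    (hmax : ∀ N', Nice inf N' → M ⊆ N' → N' = M) : Closed inf M := by
  have := hmax _ (nice_cl h hH hM) (fun x hx => Cl.base x hx)
  rw [← this]; exact closed_cl M

theorem max_diff (h : PEA inf one) (hH : Hom inf) {M : Set G} (hM : Nice inf M)
    (hmax : ∀ N', Nice inf N' → M ⊆ N' → N' = M) (b d : G) (hb : b ∈ M) (ha : b + d ∈ M) : d ∈ M := by
  classical
  have hcl := max_closed h hH hM hmax
  suffices hn : Nice inf (insert d M) by
    rw [← hmax _ hn (Set.subset_insert d M)]; exact Set.mem_insert d M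
  intro F hF
  obtain ⟨C, c1, c2, c3⟩ := hM (insert b (insert (b + d) (F.erase d))) (by
    intro x hx
    simp only [Finset.coe_insert, Finset.coe_erase, Set.mem_insert_iff] at hx
    rcases hx with rfl | rfl | hx
    · exact hb
    · exact ha
    · exact (hF hx.1).resolve_left hx.2)
  obtain ⟨S, hS, hSb⟩ := c3 b (by simp)
  obtain ⟨T, hT, hTa⟩ := c3 (b + d) (by simp)
  have eS : S ∩ T + (S - T) = S := by ext x; simp; omega
  have eT : S ∩ T + (T - S) = T := by ext x; simp; omega
  have hPQ : (S - T) + (T - S) ≤ C := by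
    rw [Multiset.le_iff_count] at *
    intro x; have := hS x; have := hT x; simp; omega
  have hq : (S - T).sum + d = (T - S).sum := by
    apply h.cancel (S ∩ T).sum
    · rw [← add_assoc, ← Multiset.sum_add, eS, hSb, ← hTa, ← eT, Multiset.sum_add, eT]
    · rw [← add_assoc, ← Multiset.sum_add, eS, hSb]; exact hM.ne h ha
  obtain ⟨R, hR⟩ := Multiset.le_iff_exists_add.1
    ((Multiset.le_add_left (T - S) (S - T)).trans hPQ)
  have hne := le_sum_ne h hPQ c2
  rw [Multiset.sum_add, add_comm] at hne
  rw [add_comm] at hR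
  subst hR
  obtain ⟨P, P', p1, p2, p3, p4, p5⟩ := refine_step h hH hcl R (T - S)
      (fun c hc => c1 c (Multiset.mem_add.2 (Or.inl hc)))
      (fun c hc => c1 c (Multiset.mem_add.2 (Or.inr hc))) c2 _ d hq hne
  refine ⟨_, fun c hc => Or.inr (p4 c hc), by rw [p3]; exact c2, fun a ha => ?_⟩
  by_cases had : a = d
  · subst had
    exact ⟨P', (Multiset.le_add_left P' P).trans (Multiset.le_add_left _ _), p2⟩
  · exact p5 a (c3 a (by simp [ha, had]))

theorem max_rd (h : PEA inf one) (hH : Hom inf) {M : Set G} (hM : Nice inf M)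
    (hmax : ∀ N', Nice inf N' → M ⊆ N' → N' = M) (h1 : one ∈ M) : RD inf M := by
  classical
  have hcl := max_closed h hH hM hmax
  have hsub : SubEA one M := ⟨h1, max_diff h hH hM hmax⟩
  intro u z v1 v2 hu hv1 hv2 huz hne
  obtain ⟨C, c1, c2, c3⟩ := hM {u, v1, v2, one} (by
    intro x hx; simp at hx; rcases hx with rfl | rfl | rfl | rfl <;> assumption)
  have hC : C.sum = one := by
    obtain ⟨S, hS, hS1⟩ := c3 one (by simp)
    obtain ⟨T, rfl⟩ := Multiset.le_iff_exists_add.1 hS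
    rw [Multiset.sum_add, hS1] at c2 ⊢
    rw [h.add_one T.sum (by rwa [add_comm]), add_zero]
  obtain ⟨S1, hS1, e1⟩ := c3 v1 (by simp)
  obtain ⟨S2, hS2, e2⟩ := c3 v2 (by simp)
  obtain ⟨Z, hZ⟩ : ∃ Z, C = (S1 + (S2 - S1)) + Z := by
    apply Multiset.le_iff_exists_add.1
    rw [Multiset.le_iff_count] at *
    intro x; have := hS1 x; have := hS2 x; simp; omega
  have hS2' : S1 ∩ S2 + (S2 - S1) = S2 := by ext x; simp; omega
  obtain ⟨c, hc⟩ := h.compl _ hne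
  have hrc : (S1 ∩ S2).sum + c = Z.sum := by
    apply h.cancel (S1 + (S2 - S1)).sum
    · rw [← Multiset.sum_add _ Z, ← hZ, hC, ← hc, ← e1, ← e2]
      conv_rhs => rw [← hS2']
      simp only [Multiset.sum_add]; abel
    · have : (S1 + (S2 - S1)).sum + ((S1 ∩ S2).sum + c) = one := by
        rw [← hc, ← e1, ← e2]
        conv_rhs => rw [← hS2']
        simp only [Multiset.sum_add]; abel
      rw [this]; exact h.one_ne
  have hzr : Z.sum + (S1 ∩ S2).sum ≠ inf := by
    rw [← Multiset.sum_add]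
    refine le_sum_ne h ?_ c2
    rw [hZ, Multiset.le_iff_count]
    intro x; simp; omega
  subst hZ
  obtain ⟨P, P', p1, p2, p3, p4, p5⟩ := refine_step h hH hcl (S1 + (S2 - S1)) Z
      (fun c hc => c1 c (Multiset.mem_add.2 (Or.inl hc)))
      (fun c hc => c1 c (Multiset.mem_add.2 (Or.inr hc))) c2 _ c hrc hzr
  obtain ⟨T, hT, hTu⟩ := p5 u (c3 u (by simp))
  rw [← p3] at c2
  set C' := S1 + (S2 - S1) + (P + P') with hC'
  set D2 := P + (S2 - S1) with hD2
  have e2' : D2.sum = v2 := by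
    rw [hD2, Multiset.sum_add, p1, ← Multiset.sum_add, hS2', e2]
  have hD : S1 + D2 ≤ C' := by
    rw [hC', hD2, Multiset.le_iff_count]; intro x; simp; omega
  set W := S1 + D2 with hW
  have hWs : W.sum = v1 + v2 := by rw [hW, Multiset.sum_add, e1, e2']
  have f1 : T ∩ W + (T - W) = T := by ext x; simp; omega
  have f2 : T ∩ W + (W - T) = W := by ext x; simp; omega
  have f3 : (W - T) + (T - W) ≤ C' := by
    rw [Multiset.le_iff_count] at *
    intro x; have := hT x; have := hD x; simp only [Multiset.count_add, Multiset.count_sub]; omega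
  have f4 : (T - W).sum + z = (W - T).sum := by
    apply h.cancel (T ∩ W).sum
    · rw [← add_assoc, ← Multiset.sum_add, ← Multiset.sum_add, f1, f2, hTu, hWs, huz]
    · rw [← add_assoc, ← Multiset.sum_add, f1, hTu, huz]; exact hne
  have f5 : (W - T).sum + (T - W).sum ≠ inf := by
    rw [← Multiset.sum_add]; exact le_sum_ne h f3 c2
  have hWM : ∀ c ∈ W, c ∈ M := fun c hc => p4 c (Multiset.mem_of_le hD hc)
  obtain ⟨D, d1, d2, d3⟩ := hom_fin h hH hcl (W - T)
    (fun c hc => hWM c (Multiset.mem_of_le (Multiset.sub_le_self _ _) hc)) _ z f4 f5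
  obtain ⟨K1, K2, k, k1, k2⟩ := map_split plus S1 D2 ((T ∩ W).map (fun c => (c, (0 : G))) + D) (by
    rw [← hW, Multiset.map_add, d1]
    conv_rhs => rw [← f2]
    congr 1
    simp [plus, Function.comp_def])
  have kM : ∀ p ∈ K1 + K2, p.1 ∈ M := by
    rw [← k]
    intro p hp
    simp only [Multiset.mem_add, Multiset.mem_map] at hp
    rcases hp with ⟨c, hc, rfl⟩ | hp
    · exact hWM c (Multiset.mem_of_le Multiset.inter_le_right hc)
    · exact (d3 p hp).1
  have kS : (K1.map Prod.fst).sum + (K2.map Prod.fst).sum = u := by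
    rw [← Multiset.sum_add, ← Multiset.map_add, ← k, Multiset.map_add, Multiset.sum_add, d2,
      Multiset.map_map]
    simp only [Function.comp_def, Multiset.map_id']
    rw [← Multiset.sum_add, f1, hTu]
  have kn : (K1.map Prod.fst).sum + (K2.map Prod.fst).sum ≠ inf := by
    rw [kS]; exact hM.ne h hu
  refine ⟨(K1.map Prod.fst).sum, (K1.map Prod.snd).sum, (K2.map Prod.fst).sum,
    (K2.map Prod.snd).sum, ?_, ?_, ?_, ?_, kS⟩
  · refine hsub.sum h _ ?_ (h.left kn)
    intro c hc
    obtain ⟨p, hp, rfl⟩ := Multiset.mem_map.1 hc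
    exact kM p (by simp [hp])
  · refine hsub.sum h _ ?_ (h.right kn)
    intro c hc
    obtain ⟨p, hp, rfl⟩ := Multiset.mem_map.1 hc
    exact kM p (by simp [hp])
  · rw [← sum_plus, k1, e1]
  · rw [← sum_plus, k2, e2']


theorem rd_fin (h : PEA inf one) {M : Set G} (hM : SubEA one M) (hR : RD inf M)
    (Q : Multiset G) : (∀ c ∈ Q, c ∈ M) → ∀ u z, u ∈ M → u + z = Q.sum → Q.sum ≠ inf →
    ∃ D : Multiset (G × G), D.map plus = Q ∧ (D.map Prod.fst).sum = u ∧
      ∀ p ∈ D, p.1 ∈ M ∧ p.2 ∈ M := by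
  induction Q using Multiset.induction_on with
  | empty =>
    intro _ u z _ h1 h2
    refine ⟨0, by simp, ?_, by simp⟩
    simpa using (h.pos (by simpa using h1)).symm
  | cons a Q ih =>
    intro hQ u z hu h1 h2
    rw [Multiset.sum_cons] at h1 h2
    have hQ' : ∀ c ∈ Q, c ∈ M := fun c hc => hQ c (by simp [hc])
    obtain ⟨u1, w1, u2, w2, m1, m2, e1, e2, e3⟩ := hR u z a Q.sum hu (hQ a (by simp))
      (hM.sum h Q hQ' (h.right h2)) h1 h2
    obtain ⟨D, d1, d2, d3⟩ := ih hQ' u2 w2 m2 e2 (h.right h2)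
    have k2 : w1 ∈ M := hM.2 u1 w1 m1 (by rw [e1]; exact hQ a (by simp))
    refine ⟨(u1, w1) ::ₘ D, by simp [d1, plus, e1], by simp [d2, e3], ?_⟩
    intro p hp
    rcases Multiset.mem_cons.1 hp with rfl | hp
    · exact ⟨m1, k2⟩
    · exact d3 p hp

theorem rd_nice (h : PEA inf one) {M : Set G} (hM : SubEA one M) (hR : RD inf M)
    (hinf : inf ∉ M) : Nice inf M := by
  classical
  intro F hF
  suffices ∃ C : Multiset G, (∀ c ∈ C, c ∈ M) ∧ C.sum = one ∧ ∀ a ∈ F, IsSub C a by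
    obtain ⟨C, c1, c2, c3⟩ := this
    exact ⟨C, c1, by rw [c2]; exact h.one_ne, c3⟩
  induction F using Finset.induction_on with
  | empty => exact ⟨{one}, by simpa using hM.1, by simp, by simp⟩
  | insert x F _ ih =>
    obtain ⟨C, c1, c2, c3⟩ := ih (fun y hy => hF (by simp at hy ⊢; exact Or.inr hy))
    have hx : x ∈ M := hF (by simp)
    obtain ⟨y, hy⟩ := h.compl x (fun e => hinf (e ▸ hx))
    obtain ⟨D, d1, d2, d3⟩ := rd_fin h hM hR C c1 x y hx (by rw [hy, c2])
      (by rw [c2]; exact h.one_ne)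
    refine ⟨0 + (D.map Prod.fst + D.map Prod.snd), ?_, ?_, ?_⟩
    · intro c hc
      simp only [zero_add, Multiset.mem_add, Multiset.mem_map] at hc
      rcases hc with ⟨p, hp, rfl⟩ | ⟨p, hp, rfl⟩
      · exact (d3 p hp).1
      · exact (d3 p hp).2
    · rw [zero_add, Multiset.sum_add, ← sum_plus, d1, c2]
    · intro a ha
      rcases Finset.mem_insert.1 ha with rfl | ha
      · exact ⟨D.map Prod.fst, by rw [zero_add]; exact Multiset.le_add_right _ _, d2⟩
      · exact refines 0 D a (by rw [zero_add, d1]; exact c3 a ha)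

/-- Blocks are closed. -/
theorem block_closed (h : PEA inf one) (hH : Hom inf) {M : Set G} (hM : SubEA one M)
    (hR : RD inf M) (hinf : inf ∉ M)
    (hmax : ∀ N, SubEA one N → RD inf N → inf ∉ N → M ⊆ N → N = M) : Closed inf M := by
  obtain ⟨N, n1, n2, n3⟩ := zorn_nice (rd_nice h hM hR hinf)
  rw [← hmax N ⟨n1 hM.1, max_diff h hH n2 n3⟩ (max_rd h hH n2 n3 (n1 hM.1))
    (fun hi => n2.ne h hi rfl) n1]
  exact max_closed h hH n2 n3

/-- `a` is sharp in `M`. -/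
def Sh (inf : G) (M : Set G) (a : G) : Prop :=
  ∀ x w, x ∈ M → x + w = a → a + x ≠ inf → x = 0

theorem sh_one (h : PEA inf one) {M : Set G} (hM : SubEA one M) (hR : RD inf M)
    (hinf : inf ∉ M) : Sh inf M one := by
  intro x w _ _ hx
  exact h.add_one x (by rwa [add_comm])

theorem sh_diff (h : PEA inf one) {M : Set G} (hM : SubEA one M) (hR : RD inf M)
    (hinf : inf ∉ M) {b d : G} (hb : b ∈ M) (ha : b + d ∈ M) (sb : Sh inf M b)
    (sa : Sh inf M (b + d)) : Sh inf M d := by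
  intro x w hx hxw hdx
  obtain ⟨a', ha'⟩ := h.compl (b + d) (fun e => hinf (e ▸ ha))
  obtain ⟨y, hy⟩ := h.compl _ hdx
  have ma' : a' ∈ M := hM.2 _ _ ha (by rw [ha']; exact hM.1)
  have e : x + y = b + a' := by
    apply h.cancel d
    · rw [← add_assoc, hy, ← ha']; abel
    · rw [← add_assoc, hy]; exact h.one_ne
  have hne : b + a' + d ≠ inf := by
    have : b + a' + d = one := by rw [← ha']; abel
    rw [this]; exact h.one_ne
  obtain ⟨x1, w1, x2, w2, m1, m2, e1, e2, e3⟩ := hR x y b a' hx hb ma' e (h.left hne)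
  have z1 : x1 = 0 := by
    apply sb x1 w1 m1 e1
    have : b + d ≠ inf := fun e => hinf (e ▸ ha)
    rw [← hxw, ← e3] at this
    apply h.left (y := x2 + w)
    convert this using 1; abel
  have z2 : x2 = 0 := by
    apply sa x2 (b + x1 + w) m2 (by rw [← hxw, ← e3]; abel)
    apply h.left (y := w2)
    rw [add_assoc, e2, ha']; exact h.one_ne
  rw [← e3, z1, z2, add_zero]

theorem sh_zero_of (h : PEA inf one) {M : Set G} (hM : SubEA one M) (hR : RD inf M)
    (hinf : inf ∉ M) {v v' x w w' : G} (sv : Sh inf M v) (hv : v + v' ≠ inf) (hx : x ∈ M)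
    (e : x + w = v) (e' : x + w' = v') : x = 0 := by
  apply sv x w hx e
  apply h.left (y := w')
  rwa [add_assoc, e']

theorem sh_subEA (h : PEA inf one) {M : Set G} (hM : SubEA one M) (hR : RD inf M)
    (hinf : inf ∉ M) : SubEA one {a | a ∈ M ∧ Sh inf M a} :=
  ⟨⟨hM.1, sh_one h hM hR hinf⟩, fun b d hb ha =>
    ⟨hM.2 b d hb.1 ha.1, sh_diff h hM hR hinf hb.1 ha.1 hb.2 ha.2⟩⟩

theorem sh_rd (h : PEA inf one) {M : Set G} (hM : SubEA one M) (hR : RD inf M)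
    (hinf : inf ∉ M) : RD inf {a | a ∈ M ∧ Sh inf M a} := by
  rintro u z v1 v2 ⟨hu, su⟩ ⟨hv1, sv1⟩ ⟨hv2, sv2⟩ e hne
  obtain ⟨v1', ev⟩ := h.compl v1 (h.left hne)
  have mv' : v1' ∈ M := hM.2 _ _ hv1 (by rw [ev]; exact hM.1)
  have hne1 : v1 + v1' ≠ inf := by rw [ev]; exact h.one_ne
  obtain ⟨u', eu⟩ := h.compl u (fun e => hinf (e ▸ hu))
  have mu' : u' ∈ M := hM.2 _ _ hu (by rw [eu]; exact hM.1)
  obtain ⟨u1, w1, u2, w2, m1, m2, e1, e2, e3⟩ := hR u u' v1 v1' hu hv1 mv' (by rw [eu, ev]) hne1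
  have hune : u1 + u2 + u' ≠ inf := by rw [e3, eu]; exact h.one_ne
  have s1 : Sh inf M u1 := by
    intro x w hx hxw hxn
    obtain ⟨y, hy⟩ := h.compl _ hxn
    have exy : x + y = u2 + u' := by
      apply h.cancel u1
      · rw [← add_assoc, hy, ← add_assoc, e3, eu]
      · rw [← add_assoc, hy]; exact h.one_ne
    obtain ⟨x1, a1, x2, a2, n1, n2, f1, f2, f3⟩ := hR x y u2 u' hx m2 mu' exy
      (h.right (x := u1) (by rwa [← add_assoc]))
    have z1 : x1 = 0 := sh_zero_of h hM hR hinf sv1 hne1 n1 (w := x2 + w + w1)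
      (w' := a1 + w2) (by rw [← e1, ← hxw, ← f3]; abel) (by rw [← e2, ← f1]; abel)
    have z2 : x2 = 0 := sh_zero_of h hM hR hinf su (v' := u') (by rw [eu]; exact h.one_ne) n2
      (w := x1 + w + u2) (by rw [← e3, ← hxw, ← f3]; abel) f2
    rw [← f3, z1, z2, add_zero]
  have s2 : Sh inf M u2 := sh_diff h hM hR hinf m1 (by rw [e3]; exact hu) s1 (by rw [e3]; exact su)
  obtain ⟨t1, b1, t2, b2, n1, n2, f1, f2, f3⟩ := hR u2 (u1 + z) v1 v2 m2 hv1 hv2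
    (by rw [← e, ← e3]; abel) hne
  have z1 : t1 = 0 := sh_zero_of h hM hR hinf sv1 hne1 n1 f1 (w' := t2 + w2)
    (by rw [← e2, ← f3]; abel)
  rw [z1, zero_add] at f3
  exact ⟨u1, w1, u2, b2, ⟨m1, s1⟩, ⟨m2, s2⟩, e1, by rw [← f3]; exact f2, e3⟩

theorem sh_dec (h : PEA inf one) {M : Set G} (hM : SubEA one M) (hR : RD inf M)
    (hinf : inf ∉ M) {a a' b : G} (ha : a ∈ M) (hb : b ∈ M) (ea : a + a' = one) :
    ∃ u1 w1 u2 w2, u1 ∈ M ∧ u2 ∈ M ∧ u1 + w1 = a ∧ u2 + w2 = a' ∧ u1 + u2 = b := by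
  obtain ⟨b', eb⟩ := h.compl b (fun e => hinf (e ▸ hb))
  exact hR b b' a a' hb ha (hM.2 _ _ ha (by rw [ea]; exact hM.1)) (by rw [ea, eb])
    (by rw [ea]; exact h.one_ne)

theorem sh_principal (h : PEA inf one) {M : Set G} (hM : SubEA one M) (hR : RD inf M)
    (hinf : inf ∉ M) {a x y w w' : G} (ha : a ∈ M) (sa : Sh inf M a) (hx : x ∈ M) (hy : y ∈ M)
    (ex : x + w = a) (ey : y + w' = a) (hne : x + y ≠ inf) : ∃ v, x + y + v = a := by
  obtain ⟨a', ea⟩ := h.compl a (fun e => hinf (e ▸ ha))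
  have hna : a + a' ≠ inf := by rw [ea]; exact h.one_ne
  obtain ⟨u1, w1, u2, w2, m1, m2, e1, e2, e3⟩ :=
    sh_dec h hM hR hinf ha (hM.add h hx hy hne) ea
  obtain ⟨t1, b1, t2, b2, n1, n2, f1, f2, f3⟩ := hR u2 u1 x y m2 hx hy (by rw [← e3, add_comm]) hne
  have z1 : t1 = 0 := sh_zero_of h hM hR hinf sa hna n1 (w := b1 + w) (w' := t2 + w2)
    (by rw [← ex, ← f1]; abel) (by rw [← e2, ← f3]; abel)
  have z2 : t2 = 0 := sh_zero_of h hM hR hinf sa hna n2 (w := b2 + w') (w' := t1 + w2)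
    (by rw [← ey, ← f2]; abel) (by rw [← e2, ← f3]; abel)
  rw [← f3, z1, z2, add_zero, add_zero] at e3
  exact ⟨w1, by rw [← e3, e1]⟩

theorem sh_le (h : PEA inf one) {M : Set G} (hM : SubEA one M) (hR : RD inf M)
    (hinf : inf ∉ M) {a a' b1 b2 c1 c2 w w' : G} (sa : Sh inf M a)
    (ea : a + a' = one) (hb1 : b1 ∈ M) (hc1 : c1 ∈ M) (hc2 : c2 ∈ M)
    (e1 : b1 + w = a) (e2 : c2 + w' = a')
    (e : b1 + b2 = c1 + c2) (hne : b1 + b2 ≠ inf) : ∃ s, b1 + s = c1 := by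
  obtain ⟨t1, p1, t2, p2, n1, n2, f1, f2, f3⟩ := hR b1 b2 c1 c2 hb1 hc1 hc2 e (by rwa [← e])
  have z2 : t2 = 0 := sh_zero_of h hM hR hinf sa (by rw [ea]; exact h.one_ne) n2
    (w := t1 + w) (w' := p2 + w') (by rw [← e1, ← f3]; abel) (by rw [← e2, ← f2]; abel)
  rw [z2, add_zero] at f3
  exact ⟨p1, by rw [← f3, f1]⟩

theorem sh_unique (h : PEA inf one) {M : Set G} (hM : SubEA one M) (hR : RD inf M)
    (hinf : inf ∉ M) {a a' b1 b2 c1 c2 w1 w2 w3 w4 : G} (sa : Sh inf M a)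
    (ea : a + a' = one) (hb1 : b1 ∈ M) (hb2 : b2 ∈ M) (hc1 : c1 ∈ M) (hc2 : c2 ∈ M)
    (e1 : b1 + w1 = a) (e2 : b2 + w2 = a') (e3 : c1 + w3 = a) (e4 : c2 + w4 = a')
    (e : b1 + b2 = c1 + c2) (hne : b1 + b2 ≠ inf) : b1 = c1 ∧ b2 = c2 := by
  obtain ⟨s, hs⟩ := sh_le h hM hR hinf sa ea hb1 hc1 hc2 e1 e4 e hne
  obtain ⟨t, ht⟩ := sh_le h hM hR hinf sa ea hc1 hb1 hb2 e3 e2 e.symm (by rwa [← e])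
  have hst : s + t = 0 := by
    apply h.cancel b1
    · rw [← add_assoc, hs, ht, add_zero]
    · rw [← add_assoc, hs, ht]; exact h.left hne
  have := h.pos hst
  rw [this, add_zero] at hs
  subst hs
  exact ⟨rfl, h.cancel _ _ _ e hne⟩

end

section transfer
variable {E : Type*} (A : EffectAlgebra E)

theorem oplus_zero (a : E) : A.oplus a A.zero = some a := by
  have h1 : A.oplus A.one A.zero = some A.one := by
    obtain ⟨b, hb⟩ := A.compl_exists A.one
    have := A.add_one b A.one (by rw [A.comm]; exact hb)
    rwa [this] at hb
  obtain ⟨b, hb⟩ := A.compl_exists a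
  rw [A.comm] at hb
  obtain ⟨e, he, he'⟩ := A.assoc b a A.zero _ _ hb h1
  rw [he, A.compl_unique b e a he' hb]

/-- `E` with an absorbing element added. -/
def Ext (_A : EffectAlgebra E) : Type _ := Option E

def toX (e : E) : Ext A := (some e : Option E)

def xadd (x y : Option E) : Option E := x.bind fun a => y.bind fun b => A.oplus a b

theorem xadd_comm (x y : Option E) : xadd A x y = xadd A y x := by
  cases x <;> cases y <;> simp [xadd, A.comm]

theorem xadd_some (x y : Option E) (c : E) : xadd A x y = some c ↔
    ∃ a b, x = some a ∧ y = some b ∧ A.oplus a b = some c := by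
  cases x <;> cases y <;> simp [xadd]

theorem xadd_assoc' (x y z : Option E) (c : E) (h : xadd A (xadd A x y) z = some c) :
    xadd A x (xadd A y z) = some c := by
  obtain ⟨xy, z, h1, rfl, h2⟩ := (xadd_some ..).1 h
  obtain ⟨x, y, rfl, rfl, h3⟩ := (xadd_some ..).1 h1
  obtain ⟨yz, h4, h5⟩ := A.assoc _ _ _ _ _ h3 h2
  simp [xadd, h4, h5]

theorem xadd_assoc (x y z : Option E) : xadd A (xadd A x y) z = xadd A x (xadd A y z) := by
  apply Option.ext
  intro c
  refine ⟨fun h => xadd_assoc' A x y z c h, fun h => ?_⟩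
  rw [xadd_comm, xadd_comm A x y]
  apply xadd_assoc'
  rwa [xadd_comm, xadd_comm A z y]

theorem xadd_zero (x : Option E) : xadd A x (some A.zero) = x := by
  cases x <;> simp [xadd, oplus_zero]

instance : Add (Ext A) := ⟨fun x y => xadd A x y⟩

instance : Zero (Ext A) := ⟨toX A A.zero⟩

instance : AddCommMonoid (Ext A) where
  add_assoc := xadd_assoc A
  add_comm := xadd_comm A
  add_zero := xadd_zero A
  zero_add x := (xadd_comm A _ _).trans (xadd_zero A x)
  nsmul := nsmulRec

def xinf : Ext A := (none : Option E)

variable {A}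

theorem add_iff {a b c : E} : toX A a + toX A b = toX A c ↔ A.oplus a b = some c := Iff.rfl

theorem toX_inj {a b : E} : toX A a = toX A b ↔ a = b := Option.some_inj

theorem toX_ne (a : E) : toX A a ≠ xinf A := Option.some_ne_none a

theorem ne_iff {x : Ext A} : x ≠ xinf A ↔ ∃ e, x = toX A e := Option.ne_none_iff_exists'

theorem zero_eq : (0 : Ext A) = toX A A.zero := rfl

theorem inf_add' (x : Ext A) : xinf A + x = xinf A := rfl

theorem pea : PEA (xinf A) (toX A A.one) := by
  have compl : ∀ x, x ≠ xinf A → ∃ y, x + y = toX A A.one := by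
    intro x hx
    obtain ⟨e, rfl⟩ := ne_iff.1 hx
    obtain ⟨b, hb⟩ := A.compl_exists e
    exact ⟨toX A b, add_iff.2 hb⟩
  have ri : ∀ x y, x + y ≠ xinf A → x ≠ xinf A := by
    rintro x y hxy rfl; exact hxy rfl
  refine ⟨fun x => rfl, ?_, compl, toX_ne _, ?_⟩
  · intro x y z e hne
    obtain ⟨c, hc⟩ := compl _ hne
    have h1 : (x + c) + y = toX A A.one := by rw [← hc]; abel
    have h2 : (x + c) + z = toX A A.one := by rw [← hc, e]; abel
    have hn1 : y + (x + c) ≠ xinf A := by rw [add_comm, h1]; exact toX_ne _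
    have hn2 : z + (x + c) ≠ xinf A := by rw [add_comm, h2]; exact toX_ne _
    obtain ⟨y, rfl⟩ := ne_iff.1 (ri _ _ hn1)
    obtain ⟨z, rfl⟩ := ne_iff.1 (ri _ _ hn2)
    rw [add_comm] at hn1
    obtain ⟨t, ht⟩ := ne_iff.1 (ri _ _ hn1)
    rw [ht] at h1 h2
    exact toX_inj.2 (A.compl_unique t y z (add_iff.1 h1) (add_iff.1 h2))
  · intro x hx
    obtain ⟨a, rfl⟩ := ne_iff.1 (ri _ _ hx)
    obtain ⟨b, hb⟩ := ne_iff.1 hx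
    exact toX_inj.2 (A.add_one a b (add_iff.1 hb))

theorem le_iff {a b : E} : A.le a b ↔ ∃ z, toX A a + z = toX A b := by
  constructor
  · rintro ⟨c, hc⟩; exact ⟨toX A c, add_iff.2 hc⟩
  · rintro ⟨z, hz⟩
    obtain ⟨c, rfl⟩ := ne_iff.1 (pea.right (x := toX A a) (y := z) (by rw [hz]; exact toX_ne _))
    exact ⟨c, add_iff.1 hz⟩

theorem compl_spec (a : E) : toX A a + toX A (A.compl a) = toX A A.one :=
  add_iff.2 (Classical.epsilon_spec (A.compl_exists a))

theorem le_compl_iff {a x : E} : A.le x (A.compl a) ↔ toX A a + toX A x ≠ xinf A := by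
  rw [le_iff]
  constructor
  · rintro ⟨z, hz⟩
    apply pea.left (y := z)
    rw [add_assoc, hz, compl_spec]; exact toX_ne _
  · intro hne
    obtain ⟨c, hc⟩ := pea.compl _ hne
    refine ⟨c, pea.cancel (toX A a) _ _ ?_ ?_⟩
    · rw [← add_assoc, hc, compl_spec]
    · rw [← add_assoc, hc]; exact toX_ne _

theorem ominus_spec {a b : E} (h : A.le b a) : toX A b + toX A (A.ominus a b) = toX A a :=
  add_iff.2 (Classical.epsilon_spec h)

theorem hom (hH : A.Homogeneous) : Hom (xinf A) := by
  intro u z v1 v2 e hne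
  have hn1 := pea.left hne
  obtain ⟨u, rfl⟩ := ne_iff.1 (pea.right hne)
  obtain ⟨v1, rfl⟩ := ne_iff.1 (pea.left hn1)
  obtain ⟨v2, rfl⟩ := ne_iff.1 (pea.right hn1)
  obtain ⟨s, hs⟩ := ne_iff.1 hn1
  obtain ⟨u1, u2, h1, h2, h3⟩ := hH u v1 v2 s (add_iff.1 hs) (le_iff.2 ⟨z, by rw [e, hs]⟩)
    (le_compl_iff.2 (by rwa [hs] at hne))
  obtain ⟨w1, e1⟩ := le_iff.1 h1
  obtain ⟨w2, e2⟩ := le_iff.1 h2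
  exact ⟨_, w1, _, w2, e1, e2, add_iff.2 h3⟩

variable (A) in
def img (B : Set E) : Set (Ext A) := toX A '' B

theorem mem_img {B : Set E} {b : E} : toX A b ∈ img A B ↔ b ∈ B := by
  constructor
  · rintro ⟨c, hc, e⟩; rwa [← toX_inj.1 e]
  · exact fun h => ⟨b, h, rfl⟩

theorem inf_img (B : Set E) : xinf A ∉ img A B := by
  rintro ⟨c, hc, e⟩; exact toX_ne c e

theorem subEA_iff {B : Set E} : A.IsSubEA B ↔ SubEA (toX A A.one) (img A B) := by
  constructor
  · rintro ⟨h1, h2⟩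
    refine ⟨mem_img.2 h1, ?_⟩
    rintro _ d ⟨b, hb, rfl⟩ ⟨a, ha, e⟩
    have hle : A.le b a := le_iff.2 ⟨d, e.symm⟩
    have : d = toX A (A.ominus a b) := by
      apply pea.cancel (toX A b)
      · rw [ominus_spec hle, e]
      · rw [← e]; exact toX_ne _
    rw [this]; exact mem_img.2 (h2 a ha b hb hle)
  · rintro ⟨h1, h2⟩
    refine ⟨mem_img.1 h1, fun a ha b hb hle => mem_img.1 (h2 (toX A b) _ (mem_img.2 hb) ?_)⟩
    rw [ominus_spec hle]; exact mem_img.2 ha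

theorem rd_iff {B : Set E} : A.RDPOn B ↔ RD (xinf A) (img A B) := by
  constructor
  · rintro hR _ z _ _ ⟨u, hu, rfl⟩ ⟨v1, hv1, rfl⟩ ⟨v2, hv2, rfl⟩ e hne
    obtain ⟨s, hs⟩ := ne_iff.1 hne
    obtain ⟨u1, u2, m1, m2, h1, h2, h3⟩ := hR u v1 v2 s hu hv1 hv2 (add_iff.1 hs)
      (le_iff.2 ⟨z, by rw [e, hs]⟩)
    obtain ⟨w1, e1⟩ := le_iff.1 h1
    obtain ⟨w2, e2⟩ := le_iff.1 h2
    exact ⟨_, w1, _, w2, mem_img.2 m1, mem_img.2 m2, e1, e2, add_iff.2 h3⟩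
  · rintro hR u v1 v2 s hu hv1 hv2 hs hle
    obtain ⟨z, hz⟩ := le_iff.1 hle
    have hs' := (add_iff (A := A)).2 hs
    obtain ⟨_, w1, _, w2, ⟨u1, m1, rfl⟩, ⟨u2, m2, rfl⟩, e1, e2, e3⟩ := hR (toX A u) z (toX A v1)
      (toX A v2) (mem_img.2 hu) (mem_img.2 hv1) (mem_img.2 hv2) (by rw [hz, hs'])
      (by rw [hs']; exact toX_ne _)
    exact ⟨u1, u2, m1, m2, le_iff.2 ⟨w1, e1⟩, le_iff.2 ⟨w2, e2⟩, add_iff.1 e3⟩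

theorem img_pre {N : Set (Ext A)} (hN : xinf A ∉ N) : img A (toX A ⁻¹' N) = N := by
  ext x
  constructor
  · rintro ⟨a, ha, rfl⟩; exact ha
  · intro hx
    obtain ⟨a, rfl⟩ := ne_iff.1 (fun e : x = xinf A => hN (e ▸ hx))
    exact ⟨a, hx, rfl⟩

theorem central_iff {B : Set E} (hB : A.IsSubEA B) (hR : A.RDPOn B) (a : E) :
    A.CentralIn B a ↔ toX A a ∈ img A B ∧ Sh (xinf A) (img A B) (toX A a) := by
  have hM := subEA_iff.1 hB
  have hRD := rd_iff.1 hR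
  have hi := inf_img (A := A) B
  constructor
  · rintro ⟨⟨ha, _⟩, h2⟩
    refine ⟨mem_img.2 ha, ?_⟩
    rintro _ w ⟨x, hx, rfl⟩ hw hne
    have h0 : A.zero ∈ B := (mem_img (A := A)).1 hM.zero
    have l0 : ∀ c, A.le A.zero c := fun c => le_iff.2 ⟨toX A c, zero_add (toX A c)⟩
    have := (h2 x hx).unique (y₁ := (x, A.zero)) (y₂ := (A.zero, x))
      ⟨hx, h0, le_iff.2 ⟨w, hw⟩, l0 _, oplus_zero A x⟩
      ⟨h0, hx, l0 _, le_compl_iff.2 hne, by rw [A.comm]; exact oplus_zero A x⟩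
    exact toX_inj.2 (Prod.ext_iff.1 this).1
  · rintro ⟨ha, sa⟩
    refine ⟨⟨mem_img.1 ha, ?_⟩, ?_⟩
    · intro x hx y hy s hxa hya hs
      obtain ⟨w, ew⟩ := le_iff.1 hxa
      obtain ⟨w', ew'⟩ := le_iff.1 hya
      have hs' := (add_iff (A := A)).2 hs
      obtain ⟨v, hv⟩ := sh_principal pea hM hRD hi ha sa (mem_img.2 hx) (mem_img.2 hy) ew ew'
        (by rw [hs']; exact toX_ne _)
      exact le_iff.2 ⟨v, by rw [← hs', hv]⟩
    · intro b hb
      obtain ⟨_, w1, _, w2, ⟨u1, m1, rfl⟩, ⟨u2, m2, rfl⟩, e1, e2, e3⟩ :=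
        sh_dec pea hM hRD hi ha (mem_img.2 hb) (compl_spec a)
      refine ⟨(u1, u2), ⟨m1, m2, le_iff.2 ⟨w1, e1⟩, le_iff.2 ⟨w2, e2⟩, add_iff.1 e3⟩, ?_⟩
      rintro ⟨c1, c2⟩ ⟨n1, n2, l1, l2, hs⟩
      obtain ⟨w3, e4⟩ := le_iff.1 l1
      obtain ⟨w4, e5⟩ := le_iff.1 l2
      have hs' := (add_iff (A := A)).2 hs
      obtain ⟨r1, r2⟩ := sh_unique pea hM hRD hi sa (compl_spec a) (mem_img.2 n1) (mem_img.2 n2)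
        (mem_img.2 m1) (mem_img.2 m2) e4 e5 e1 e2 (by rw [hs', e3]) (by rw [hs']; exact toX_ne _)
      exact Prod.ext (toX_inj.1 r1) (toX_inj.1 r2)

end transfer
end SharpBlock

/-- For every block `B⁰` of the orthoalgebra of sharp elements
and every block `B` of `E` with `B⁰ ⊆ B`, `B⁰` is the center of `B`. -/
theorem sharp_block_is_center {E : Type*} (A : EffectAlgebra E)
    (hH : A.Homogeneous) (B0 B : Set E)
    (hB0 : A.IsBlockIn {a | A.Sharp a} B0) (hB : A.IsBlock B)
    (hsub : B0 ⊆ B) :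
    B0 = {a | A.CentralIn B a} := by
  open SharpBlock in
  obtain ⟨hs, hr, hmax⟩ := hB
  obtain ⟨k1, k2, k3, k4⟩ := hB0
  have hM := subEA_iff.1 hs
  have hRD := rd_iff.1 hr
  have hi := inf_img (A := A) B
  have hcl : Closed (xinf A) (img A B) := by
    refine block_closed pea (hom hH) hM hRD hi ?_
    intro N n1 n2 n3 n4
    rw [← img_pre n3] at n1 n2
    have := hmax _ (subEA_iff.2 n1) (rd_iff.2 n2) (fun b hb => n4 (mem_img.2 hb))
    rw [← img_pre n3, this]
  have hpre : img A {a | A.CentralIn B a} =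
      {a | a ∈ img A B ∧ Sh (xinf A) (img A B) a} := by
    rw [← img_pre (A := A) (N := {a | a ∈ img A B ∧ Sh (xinf A) (img A B) a}) (fun h => hi h.1)]
    congr 1
    ext a
    exact central_iff hs hr a
  refine (k4 _ ?_ (subEA_iff.2 ?_) (rd_iff.2 ?_) ?_).symm
  · intro a ha x hxa hxa'
    obtain ⟨m, sa⟩ := (central_iff hs hr a).1 ha
    obtain ⟨w, hw⟩ := le_iff.1 hxa
    have hne := le_compl_iff.1 hxa'
    have hx := (hcl (toX A x) w (by rw [hw]; exact m) (by rw [hw]; exact hne)).1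
    exact toX_inj.1 (sa _ w hx hw hne)
  · rw [hpre]; exact sh_subEA pea hM hRD hi
  · rw [hpre]; exact sh_rd pea hM hRD hi
  · intro a ha
    refine (central_iff hs hr a).2 ⟨mem_img.2 (hsub ha), ?_⟩
    rintro _ w ⟨x, hx, rfl⟩ hw hne
    exact toX_inj.2 (k1 ha x (le_iff.2 ⟨w, hw⟩) (le_compl_iff.2 hne))
end

section
/- Let E be a homogeneous effect algebra. Assume there is an element a ∈ E with a ≤ a' such that E is isomorphic (as an effect algebra) to the interval effect algebra [0, a]_E. Then E satisfies the Riesz decomposition property. -/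
theorem EA_compl_spec {E : Type*} (A : EffectAlgebra E) (x : E) :
    A.oplus x (A.compl x) = some A.one :=
  Classical.epsilon_spec (p := fun b => A.oplus x b = some A.one) (A.compl_exists x)

theorem EA_le_trans {E : Type*} (A : EffectAlgebra E) {x y z : E}
    (h : A.le x y) (h' : A.le y z) : A.le x z := by
  obtain ⟨c, hc⟩ := h
  obtain ⟨d, hd⟩ := h'
  obtain ⟨e, _, he⟩ := A.assoc _ _ _ _ _ hc hd
  exact ⟨e, he⟩

theorem EA_le_right {E : Type*} (A : EffectAlgebra E) {x y z : E}
    (h : A.oplus x y = some z) : A.le y z := ⟨x, by rw [A.comm]; exact h⟩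

theorem EA_compl_anti {E : Type*} (A : EffectAlgebra E) {y z : E}
    (h : A.le y z) : A.le (A.compl z) (A.compl y) := by
  obtain ⟨q, hq⟩ := h
  obtain ⟨r, hr, hr'⟩ := A.assoc _ _ _ _ _ hq (EA_compl_spec A z)
  have := A.compl_unique _ _ _ hr' (EA_compl_spec A y)
  subst this
  exact EA_le_right A hr

/-- If a homogeneous effect algebra `E` is isomorphic to the
interval effect algebra `[0, a]_E` for some `a ≤ a'`, then `E` satisfies the
Riesz decomposition property. Here `φ : E → [0,a]_E` is a bijective morphism
whose inverse is a morphism; in `[0,a]_E`, `x ⊕ y` is defined iff it is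
defined in `E` and `≤ a`, and `a` is the unit. -/
theorem iso_to_interval_rdp {E : Type*} (A : EffectAlgebra E)
    (hH : A.Homogeneous) (a : E) (ha : A.le a (A.compl a))
    (φ : E → E)
    (hrange : ∀ x, A.le (φ x) a)
    (hinj : Function.Injective φ)
    (hsurj : ∀ y, A.le y a → ∃ x, φ x = y)
    (hone : φ A.one = a)
    (hmor : ∀ x y s, A.oplus x y = some s →
      ∃ t, A.oplus (φ x) (φ y) = some t ∧ A.le t a ∧ φ s = t)
    (hinv : ∀ x y t, A.oplus (φ x) (φ y) = some t → A.le t a →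
      ∃ s, A.oplus x y = some s ∧ φ s = t) :
    A.RDP := by
  intro u v₁ v₂ s hs hu
  have hle : ∀ x y, A.le x y → A.le (φ x) (φ y) := by
    rintro x y ⟨c, hc⟩
    obtain ⟨t, ht, _, rfl⟩ := hmor _ _ _ hc
    exact ⟨_, ht⟩
  have hrefl : ∀ x y, A.le (φ x) (φ y) → A.le x y := by
    rintro x y ⟨c, hc⟩
    obtain ⟨z, rfl⟩ := hsurj c (EA_le_trans A (EA_le_right A hc) (hrange y))
    obtain ⟨w, hw, hwy⟩ := hinv _ _ _ hc (hrange y)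
    exact ⟨z, by rw [hw, hinj hwy]⟩
  obtain ⟨t, ht, _, rfl⟩ := hmor _ _ _ hs
  have hus : A.le (φ u) (A.compl (φ s)) :=
    EA_le_trans A (EA_le_trans A (hrange u) ha) (EA_compl_anti A (hrange s))
  obtain ⟨w₁, w₂, h₁, h₂, h⟩ := hH _ _ _ _ ht (hle _ _ hu) hus
  obtain ⟨x₁, rfl⟩ := hsurj w₁ (EA_le_trans A h₁ (hrange _))
  obtain ⟨x₂, rfl⟩ := hsurj w₂ (EA_le_trans A h₂ (hrange _))
  obtain ⟨y, hy, hyu⟩ := hinv _ _ _ h (hrange u)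
  exact ⟨x₁, x₂, hrefl _ _ h₁, hrefl _ _ h₂, by rw [hy, hinj hyu]⟩
end

section
/- Let H be a complex Hilbert space with dim(H) > 1. Then the standard effect algebra E(H) is not homogeneous; concretely, there exist self-adjoint bounded operators u, v₁, v₂ on H with 0 ≤ v₁, 0 ≤ v₂, v₁ + v₂ ≤ I, 0 ≤ u ≤ v₁ + v₂ and u + v₁ + v₂ ≤ I (i.e. u ≤ I − (v₁ + v₂)), such that there are no self-adjoint operators u₁, u₂ with 0 ≤ u₁ ≤ v₁, 0 ≤ u₂ ≤ v₂ and u = u₁ + u₂. -/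
open scoped ComplexOrder in
theorem aux_smul {H : Type*} [NormedAddCommGroup H] [InnerProductSpace ℂ H]
    (T : H →L[ℂ] H) (hT : T.IsPositive) : ((1 / 2 : ℂ) • T).IsPositive := by
  refine hT.smul_of_nonneg ?_
  rw [Complex.le_def]
  norm_num

open scoped ComplexOrder in
theorem aux_smul4 {H : Type*} [NormedAddCommGroup H] [InnerProductSpace ℂ H]
    (T : H →L[ℂ] H) (hT : T.IsPositive) : ((1 / 4 : ℂ) • T).IsPositive := by
  refine hT.smul_of_nonneg ?_
  rw [Complex.le_def]
  norm_num

open InnerProductSpace in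
theorem aux_orthonormal_pair {H : Type*} [NormedAddCommGroup H]
    [InnerProductSpace ℂ H] (hdim : 1 < Module.rank ℂ H) :
    ∃ e f : H, inner ℂ e e = (1 : ℂ) ∧ inner ℂ f f = (1 : ℂ) ∧ inner ℂ e f = (0 : ℂ) ∧
      inner ℂ f e = (0 : ℂ) := by
  have h2 : ((2 : ℕ) : Cardinal) ≤ Module.rank ℂ H := by
    have := Order.succ_le_of_lt hdim
    rw [← Nat.cast_one, ← Cardinal.nat_succ] at this
    exact this
  obtain ⟨v, hv⟩ := (Module.le_rank_iff_exists_linearMap).1 h2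
  have hli : LinearIndependent ℂ (fun i : Fin 2 => v (Pi.single i 1)) := by
    have := (Pi.basisFun ℂ (Fin 2)).linearIndependent.map' v (LinearMap.ker_eq_bot.2 hv)
    simpa [Function.comp_def] using this
  have ho := gramSchmidtNormed_orthonormal hli
  rw [orthonormal_iff_ite] at ho
  exact ⟨_, _, by simpa using ho 0 0, by simpa using ho 1 1, by simpa using ho 0 1,
    by simpa using ho 1 0⟩

theorem aux_pos_offdiag {H : Type*} [NormedAddCommGroup H]
    [InnerProductSpace ℂ H] (T : H →L[ℂ] H) (hT : T.IsPositive) (e f : H)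
    (hf : (inner ℂ (T f) f).re ≤ 0) : (inner ℂ (T e) f).re = 0 := by
  have key : ∀ t : ℝ, 0 ≤ (inner ℂ (T e) e).re + 2 * t * (inner ℂ (T e) f).re := by
    intro t
    have h := hT.re_inner_nonneg_left (e + (t : ℂ) • f)
    have hs : inner ℂ (T f) e = (starRingEnd ℂ) (inner ℂ (T e) f) := by
      rw [hT.inner_left_eq_inner_right, inner_conj_symm]
    simp only [map_add, map_smul, inner_add_left, inner_add_right, inner_smul_left,
      inner_smul_right, hs, Complex.conj_ofReal] at h
    have hr : (inner ℂ f (T e)).re = (inner ℂ (T e) f).re := by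
      rw [← inner_conj_symm, Complex.conj_re]
    simp [hr] at h
    nlinarith [mul_nonneg (mul_self_nonneg t) (neg_nonneg.2 hf)]
  have h0 := key 0
  by_contra hne
  set a := (inner ℂ (T e) e).re
  set r := (inner ℂ (T e) f).re
  have h1 := key (-(a + 1) / (2 * r))
  have : 2 * (-(a + 1) / (2 * r)) * r = -(a + 1) := by field_simp
  linarith

/-- For a complex Hilbert space `H` with `dim H > 1`, the
standard effect algebra `E(H)` is not homogeneous: there are effects
`u, v₁, v₂` with `v₁ ⊥ v₂`, `u ≤ v₁ + v₂` and `u ≤ I - (v₁ + v₂)` admitting no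
decomposition `u = u₁ + u₂` with `0 ≤ u₁ ≤ v₁`, `0 ≤ u₂ ≤ v₂`. -/
theorem effects_not_homogeneous {H : Type*} [NormedAddCommGroup H]
    [InnerProductSpace ℂ H] [CompleteSpace H]
    (hdim : 1 < Module.rank ℂ H) :
    ∃ u v₁ v₂ : H →L[ℂ] H,
      v₁.IsPositive ∧ v₂.IsPositive ∧ (1 - (v₁ + v₂)).IsPositive ∧
      u.IsPositive ∧ ((v₁ + v₂) - u).IsPositive ∧
      (1 - (u + (v₁ + v₂))).IsPositive ∧
      ¬ ∃ u₁ u₂ : H →L[ℂ] H, u₁.IsPositive ∧ (v₁ - u₁).IsPositive ∧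
          u₂.IsPositive ∧ (v₂ - u₂).IsPositive ∧ u = u₁ + u₂ := by
  obtain ⟨e, f, hee, hff, hef, hfe⟩ := aux_orthonormal_pair hdim
  have hne : ‖e‖ = 1 := by
    have := norm_sq_eq_re_inner (𝕜 := ℂ) e
    rw [hee] at this
    simp at this; rcases this with h | h
    · exact h
    · linarith [norm_nonneg e, norm_nonneg f]
  have hnf : ‖f‖ = 1 := by
    have := norm_sq_eq_re_inner (𝕜 := ℂ) f
    rw [hff] at this
    simp at this; rcases this with h | h
    · exact h
    · linarith [norm_nonneg e, norm_nonneg f]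
  let R : H → H →L[ℂ] H := fun x => InnerProductSpace.rankOne ℂ x x
  have hR : ∀ x, (R x).IsPositive := fun x => InnerProductSpace.isPositive_rankOne_self x
  have hv₁ := aux_smul _ (hR e)
  have hv₂ := aux_smul _ (hR f)
  have hu := aux_smul4 _ (hR (e + f))
  have hw := aux_smul4 _ (hR (e - f))
  have hsub : ((1 / 2 : ℂ) • R e + (1 / 2 : ℂ) • R f) - (1 / 4 : ℂ) • R (e + f)
      = (1 / 4 : ℂ) • R (e - f) := by
    simp only [R, map_add, map_sub, ContinuousLinearMap.add_apply, ContinuousLinearMap.sub_apply]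
    module
  have hQ : (1 - (R e + R f)).IsPositive := by
    have hid : IsIdempotentElem (1 - (R e + R f)) := by
      apply IsIdempotentElem.one_sub
      ext x
      simp [R, hne, hnf, hef, hfe, inner_add_right, inner_smul_right]
    rw [ContinuousLinearMap.IsIdempotentElem.isPositive_iff_isSelfAdjoint hid]
    exact (IsSelfAdjoint.one _).sub ((hR e).isSelfAdjoint.add (hR f).isSelfAdjoint)
  refine ⟨(1 / 4 : ℂ) • R (e + f), (1 / 2 : ℂ) • R e, (1 / 2 : ℂ) • R f, hv₁, hv₂, ?_, hu, ?_,
    ?_, ?_⟩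
  · have : 1 - ((1 / 2 : ℂ) • R e + (1 / 2 : ℂ) • R f)
        = (1 - (R e + R f)) + ((1 / 2 : ℂ) • R e + (1 / 2 : ℂ) • R f) := by module
    rw [this]
    exact hQ.add (hv₁.add hv₂)
  · rw [hsub]; exact hw
  · have : 1 - ((1 / 4 : ℂ) • R (e + f) + ((1 / 2 : ℂ) • R e + (1 / 2 : ℂ) • R f))
        = (1 - (R e + R f)) + (((1 / 2 : ℂ) • R e + (1 / 2 : ℂ) • R f)
          - (1 / 4 : ℂ) • R (e + f)) := by module
    rw [this, hsub]
    exact hQ.add hw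
  · rintro ⟨u₁, u₂, h1, h1', h2, h2', h⟩
    have a1 : (inner ℂ (u₁ f) f).re ≤ 0 := by
      have := h1'.re_inner_nonneg_left f
      simpa [R, inner_sub_left, hef] using this
    have a2 : (inner ℂ (u₂ e) e).re ≤ 0 := by
      have := h2'.re_inner_nonneg_left e
      simpa [R, inner_sub_left, hfe] using this
    have b1 := aux_pos_offdiag u₁ h1 e f a1
    have b2 := aux_pos_offdiag u₂ h2 f e a2
    rw [h2.inner_left_eq_inner_right, ← inner_conj_symm, Complex.conj_re] at b2
    have h3 := congrArg (fun T : H →L[ℂ] H => (inner ℂ (T e) f).re) h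
    simp [R, inner_add_left, inner_smul_left, hne, hnf, hef, hfe, b1, b2] at h3
end
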